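/- (Theorem: Bethe/GAMP correspondence.) Let ρ ∈ [0,1], M, N ∈ ℕ, F ∈ ℝ^{M×N}, and for each μ let p_μ : ℝ → ℝ be measurable and nonnegative. Let (R,Σ,ω,a,c) be such that Σ_i > 0, c_i ≥ 0, V_μ := ∑_i F_{μi}² c_i > 0, and suppose for each μ there exists V'_μ > V_μ with ∫ (1 + z²)·p_μ(z)·exp(−(z−ω_μ)²/(2V'_μ)) dz < ∞ and Z_out^μ(ω_μ,V_μ) > 0 (so that differentiation under the integral sign is valid). Then all partial derivatives of the GAMP Bethe free energy F_GAMP with respect to each R_i, each Σ_i, each ω_μ, each a_i and each c_i vanish at (R,Σ,ω,a,c) if and only if the GAMP fixed-point equations hold: for every i and μ, (i) a_i = f_a(R_i,Σ_i), (ii) c_i = f_c(R_i,Σ_i), (iii) ω_μ = ∑_i F_{μi} a_i − V_μ·g_out^μ(ω_μ,V_μ), (iv) R_i = a_i + Σ_i²·∑_μ F_{μi}·g_out^μ(ω_μ,V_μ), and (v) 1/Σ_i² = ∑_μ F_{μi}²·(−∂_ω g_out^μ(ω_μ,V_μ)). -/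

import Mathlib

open MeasureTheory ProbabilityTheory

/-- The prior `P₀ = ρ·N(0,1) + (1-ρ)·δ₀`. -/
noncomputable def P0 (ρ : ℝ) : Measure ℝ :=
  ENNReal.ofReal ρ • gaussianReal 0 1 + ENNReal.ofReal (1 - ρ) • Measure.dirac 0

/-- Partition function `Z(R,Σ) = ∫ exp(-(x-R)²/(2Σ²)) dP₀(x)`. -/
noncomputable def Zpart (ρ R σ : ℝ) : ℝ :=
  ∫ x, Real.exp (-(x - R) ^ 2 / (2 * σ ^ 2)) ∂(P0 ρ)

/-- Posterior mean `f_a(R,Σ)`. -/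
noncomputable def fa (ρ R σ : ℝ) : ℝ :=
  (Zpart ρ R σ)⁻¹ * ∫ x, x * Real.exp (-(x - R) ^ 2 / (2 * σ ^ 2)) ∂(P0 ρ)

/-- Posterior variance `f_c(R,Σ)`. -/
noncomputable def fc (ρ R σ : ℝ) : ℝ :=
  (Zpart ρ R σ)⁻¹ * (∫ x, x ^ 2 * Real.exp (-(x - R) ^ 2 / (2 * σ ^ 2)) ∂(P0 ρ))
    - fa ρ R σ ^ 2

/-- Output-channel partition function `Z_out(ω,V) = ∫ p(z)·exp(−(z−ω)²/(2V)) dz`. -/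
noncomputable def Zout (p : ℝ → ℝ) (ω V : ℝ) : ℝ :=
  ∫ z, p z * Real.exp (-(z - ω) ^ 2 / (2 * V))

/-- The output function
`g_out(ω,V) = [∫ p(z)·(z−ω)·exp(−(z−ω)²/(2V)) dz]/(V·Z_out(ω,V))`. -/
noncomputable def gout (p : ℝ → ℝ) (ω V : ℝ) : ℝ :=
  (∫ z, p z * (z - ω) * Real.exp (-(z - ω) ^ 2 / (2 * V))) / (V * Zout p ω V)

/-- The normalized per-measurement partition function `Z^μ(ω,V) = (2πV)^{−1/2}·Z_out(ω,V)`. -/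
noncomputable def Zmu (p : ℝ → ℝ) (ω V : ℝ) : ℝ :=
  (Real.sqrt (2 * Real.pi * V))⁻¹ * Zout p ω V

/-- The GAMP Bethe free energy `F_GAMP(R,Σ,ω,a,c)`, with `V_μ = ∑_i F_{μi}² c_i`. -/
noncomputable def FGAMP (ρ : ℝ) {M N : ℕ} (F : Fin M → Fin N → ℝ)
    (p : Fin M → ℝ → ℝ) (R Sv : Fin N → ℝ) (ω : Fin M → ℝ) (a c : Fin N → ℝ) : ℝ :=
  -∑ μ, Real.log (Zmu (p μ) (ω μ) (∑ i, F μ i ^ 2 * c i))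
    - ∑ i, (c i + (a i - R i) ^ 2) / (2 * Sv i ^ 2)
    - ∑ μ, (ω μ - ∑ i, F μ i * a i) ^ 2 / (2 * ∑ i, F μ i ^ 2 * c i)
    - ∑ i, Real.log (Zpart ρ (R i) (Sv i))

/-!
Completing the square shows that exponentially tilting the Gaussian posterior of centre `t` and
variance `v` by `exp (s * x)` gives the posterior of centre `t + s * v`. Hence, up to a quadratic
term, `log Z(·, v)` is a cumulant generating function of that posterior: in terms of the posterior
mean `m` and variance `σ²` its derivative is `(m - t) / v`, and `∂_t m = σ² / v`. As a function of
`-1 / (2 * v)`, `log Z(t, ·)` is the cumulant generating function of `(x - t) ^ 2`, with derivative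
the second posterior moment `σ² + (m - t) ^ 2` about `t`. Prior and channel are both instances, the
channel being the measure with density `p`.

With these formulas, `∂_R = 0` reads (i) and `∂_ω = 0` reads (iii). Given (i), `∂_Σ = 0` is (ii);
(iii) says that `(ω - ∑ F a) / V = -g_out`, which turns `∂_a = 0` into (iv) and, the squares
`g_out ^ 2` cancelling, `∂_c = 0` into (v).
-/

open Real Filter Topology
open scoped Matrix

section GaussianTail

/-- `ν` integrates some centred Gaussian weight of variance larger than `v`; the margin is what lets
one differentiate Gaussian integrals at variance `v` in their centre and variance. -/
def HasGaussianTail (ν : Measure ℝ) (v : ℝ) : Prop :=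
  ∃ w > v, Integrable (fun x => exp (-x ^ 2 / (2 * w))) ν

variable {ν : Measure ℝ} {r t v w : ℝ}

theorem sq_sub_div_le_add (hv : 0 < v) (hvw : v < w) (x : ℝ) :
    (x - r) ^ 2 / (2 * w) ≤ (x - t) ^ 2 / (2 * v) + (t - r) ^ 2 / (2 * (w - v)) := by
  have hd : 0 < w - v := sub_pos.2 hvw
  have hw : 0 < w := hv.trans hvw
  have square : (x - t) ^ 2 / (2 * v) + (t - r) ^ 2 / (2 * (w - v)) - (x - r) ^ 2 / (2 * w) =
      ((w - v) * (x - t) - v * (t - r)) ^ 2 / (2 * v * (w - v) * w) := by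
    field_simp
    ring
  have : 0 ≤ ((w - v) * (x - t) - v * (t - r)) ^ 2 / (2 * v * (w - v) * w) := by positivity
  linarith

theorem integrable_exp_neg_sq_of_lt (hv : 0 < v) (hvw : v < w)
    (h : Integrable (fun x => exp (-(x - r) ^ 2 / (2 * w))) ν) (t : ℝ) :
    Integrable (fun x => exp (-(x - t) ^ 2 / (2 * v))) ν := by
  refine (h.const_mul (exp ((t - r) ^ 2 / (2 * (w - v))))).mono' (by fun_prop)
    (ae_of_all _ fun x => ?_)
  rw [norm_of_nonneg (exp_pos _).le, ← exp_add, exp_le_exp, neg_div, neg_div]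
  linarith [sq_sub_div_le_add (r := r) (t := t) hv hvw x]

namespace HasGaussianTail

theorem of_integrable (hv : 0 < v) (hvw : v < w)
    (h : Integrable (fun x => exp (-(x - r) ^ 2 / (2 * w))) ν) : HasGaussianTail ν v := by
  obtain ⟨u, hvu, huw⟩ := exists_between hvw
  exact ⟨u, hvu, by simpa using integrable_exp_neg_sq_of_lt (hv.trans hvu) huw h 0⟩

theorem of_isFiniteMeasure [IsFiniteMeasure ν] (hv : 0 < v) : HasGaussianTail ν v := by
  refine ⟨v + 1, lt_add_one v, .of_bound (by fun_prop) 1 (ae_of_all _ fun x => ?_)⟩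
  rw [norm_of_nonneg (exp_pos _).le, exp_le_one_iff, neg_div, neg_nonpos]
  positivity

theorem integrable (h : HasGaussianTail ν v) (hv : 0 < v) (t : ℝ) :
    Integrable (fun x => exp (-(x - t) ^ 2 / (2 * v))) ν := by
  obtain ⟨w, hvw, hw⟩ := h
  exact integrable_exp_neg_sq_of_lt (r := 0) hv hvw (by simpa using hw) t

theorem eventually (h : HasGaussianTail ν v) : ∀ᶠ u in 𝓝 v, HasGaussianTail ν u := by
  obtain ⟨w, hvw, hw⟩ := h
  filter_upwards [Iio_mem_nhds hvw] with u huw using ⟨w, huw, hw⟩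

end HasGaussianTail

end GaussianTail

section GaussianPosterior

/-- Total mass of `ν` under the unnormalized Gaussian weight of centre `t` and variance `v`, common
form of `Z` (with `v = Σ ^ 2`) and `Z_out`. -/
noncomputable def gaussianPartition (ν : Measure ℝ) (t v : ℝ) : ℝ :=
  ∫ x, exp (-(x - t) ^ 2 / (2 * v)) ∂ν

/-- The posterior law under the prior `ν` of a quantity observed as `t` through Gaussian noise of
variance `v`. -/
noncomputable def gaussianPosterior (ν : Measure ℝ) (t v : ℝ) : Measure ℝ :=
  ν.tilted fun x => -(x - t) ^ 2 / (2 * v)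

/-- Mean of the Gaussian posterior; `posteriorMean ν R (Σ ^ 2)` is `f_a(R,Σ)` for the prior `ν`. -/
noncomputable def posteriorMean (ν : Measure ℝ) (t v : ℝ) : ℝ :=
  (gaussianPosterior ν t v)[id]

/-- Variance of the Gaussian posterior; `posteriorVariance ν R (Σ ^ 2)` is `f_c(R,Σ)` for the prior
`ν`. -/
noncomputable def posteriorVariance (ν : Measure ℝ) (t v : ℝ) : ℝ :=
  Var[id; gaussianPosterior ν t v]

variable {ν : Measure ℝ} {t v : ℝ}

theorem integral_gaussianPosterior (ν : Measure ℝ) (t v : ℝ) (g : ℝ → ℝ) :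
    (gaussianPosterior ν t v)[g] =
      (gaussianPartition ν t v)⁻¹ * ∫ x, g x * exp (-(x - t) ^ 2 / (2 * v)) ∂ν := by
  rw [gaussianPosterior, integral_tilted, ← integral_const_mul]
  refine integral_congr_ae (ae_of_all _ fun x => ?_)
  simp only [gaussianPartition, smul_eq_mul]
  ring

theorem gaussianPartition_pos [NeZero ν] (h : HasGaussianTail ν v) (hv : 0 < v) (t : ℝ) :
    0 < gaussianPartition ν t v :=
  integral_exp_pos (h.integrable hv t)

theorem isProbabilityMeasure_gaussianPosterior [NeZero ν] (h : HasGaussianTail ν v) (hv : 0 < v)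
    (t : ℝ) : IsProbabilityMeasure (gaussianPosterior ν t v) :=
  isProbabilityMeasure_tilted (h.integrable hv t)

theorem tilted_const_add {α : Type*} [MeasurableSpace α] (ν : Measure α) (c : ℝ) (f : α → ℝ) :
    ν.tilted (fun x => c + f x) = ν.tilted f := by
  simp only [Measure.tilted, exp_add, integral_const_mul, mul_div_mul_left _ _ (exp_ne_zero c)]

theorem neg_sq_sub_div_add_mul (hv : v ≠ 0) (t s x : ℝ) :
    -(x - t) ^ 2 / (2 * v) + s * x =
      (s * t + s ^ 2 * v / 2) + -(x - (t + s * v)) ^ 2 / (2 * v) := by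
  field_simp
  ring

theorem gaussianPosterior_tilted_mul (h : HasGaussianTail ν v) (hv : 0 < v) (t s : ℝ) :
    (gaussianPosterior ν t v).tilted (s * id ·) = gaussianPosterior ν (t + s * v) v := by
  rw [gaussianPosterior, tilted_tilted (h.integrable hv t)]
  calc ν.tilted (fun x => -(x - t) ^ 2 / (2 * v) + s * x)
    _ = ν.tilted (fun x => (s * t + s ^ 2 * v / 2) + -(x - (t + s * v)) ^ 2 / (2 * v)) := by
      simp only [neg_sq_sub_div_add_mul hv.ne']
    _ = gaussianPosterior ν (t + s * v) v := tilted_const_add _ _ _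

theorem integrableExpSet_id_gaussianPosterior (h : HasGaussianTail ν v) (hv : 0 < v) (t : ℝ) :
    integrableExpSet id (gaussianPosterior ν t v) = Set.univ := by
  refine Set.eq_univ_of_forall fun s => (integrable_tilted_iff (h.integrable hv t) _).2 ?_
  refine ((h.integrable hv (t + s * v)).const_mul (exp (s * t + s ^ 2 * v / 2))).congr
    (ae_of_all _ fun x => ?_)
  simp only [id, smul_eq_mul, ← exp_add, neg_sq_sub_div_add_mul hv.ne']

theorem mem_interior_integrableExpSet_id (h : HasGaussianTail ν v) (hv : 0 < v) (t s : ℝ) :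
    s ∈ interior (integrableExpSet id (gaussianPosterior ν t v)) := by
  simp [integrableExpSet_id_gaussianPosterior h hv]

theorem memLp_id_gaussianPosterior (h : HasGaussianTail ν v) (hv : 0 < v) (t : ℝ) (p : NNReal) :
    MemLp id p (gaussianPosterior ν t v) :=
  memLp_of_mem_interior_integrableExpSet (mem_interior_integrableExpSet_id h hv t 0) p

theorem integral_sub_gaussianPosterior [NeZero ν] (h : HasGaussianTail ν v) (hv : 0 < v) (t : ℝ) :
    (gaussianPosterior ν t v)[fun x => x - t] = posteriorMean ν t v - t := by
  have := isProbabilityMeasure_gaussianPosterior h hv t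
  have hint : Integrable id (gaussianPosterior ν t v) :=
    (memLp_id_gaussianPosterior h hv t 1).integrable le_rfl
  simpa [posteriorMean] using integral_sub hint (integrable_const t)

theorem posteriorVariance_eq_sub [NeZero ν] (h : HasGaussianTail ν v) (hv : 0 < v) (t : ℝ) :
    posteriorVariance ν t v =
      (gaussianPosterior ν t v)[fun x => x ^ 2] - posteriorMean ν t v ^ 2 := by
  have := isProbabilityMeasure_gaussianPosterior h hv t
  exact variance_eq_sub (memLp_id_gaussianPosterior h hv t 2)

theorem integral_sq_sub_gaussianPosterior [NeZero ν] (h : HasGaussianTail ν v) (hv : 0 < v)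
    (t : ℝ) : (gaussianPosterior ν t v)[fun x => (x - t) ^ 2] =
      posteriorVariance ν t v + (posteriorMean ν t v - t) ^ 2 := by
  have := isProbabilityMeasure_gaussianPosterior h hv t
  have hL2 := memLp_id_gaussianPosterior h hv t 2
  have hshift : Var[fun x => x - t; gaussianPosterior ν t v] = posteriorVariance ν t v :=
    variance_sub_const hL2.aestronglyMeasurable t
  have hvar : Var[fun x => x - t; gaussianPosterior ν t v] =
      (gaussianPosterior ν t v)[fun x => (x - t) ^ 2] -
        (gaussianPosterior ν t v)[fun x => x - t] ^ 2 :=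
    variance_eq_sub (hL2.sub (memLp_const t))
  rw [← hshift, hvar, integral_sub_gaussianPosterior h hv, sub_add_cancel]

theorem cgf_id_gaussianPosterior [NeZero ν] (h : HasGaussianTail ν v) (hv : 0 < v) (t s : ℝ) :
    cgf id (gaussianPosterior ν t v) s = s * t + s ^ 2 * v / 2 +
      log (gaussianPartition ν (t + s * v) v) - log (gaussianPartition ν t v) := by
  have hmgf : mgf id (gaussianPosterior ν t v) s = exp (s * t + s ^ 2 * v / 2) *
      gaussianPartition ν (t + s * v) v / gaussianPartition ν t v := by
    rw [mgf, gaussianPosterior, integral_exp_tilted]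
    simp only [Pi.add_apply, id, neg_sq_sub_div_add_mul hv.ne', exp_add _ (-_ / _),
      integral_const_mul, gaussianPartition]
  rw [cgf, hmgf, log_div (mul_pos (exp_pos _) (gaussianPartition_pos h hv _)).ne'
    (gaussianPartition_pos h hv t).ne', log_mul (exp_ne_zero _)
    (gaussianPartition_pos h hv _).ne', log_exp]

theorem deriv_cgf_id_gaussianPosterior (h : HasGaussianTail ν v) (hv : 0 < v) (t s : ℝ) :
    deriv (cgf id (gaussianPosterior ν t v)) s = posteriorMean ν (t + s * v) v := by
  rw [← integral_tilted_mul_self (mem_interior_integrableExpSet_id h hv t s),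
    gaussianPosterior_tilted_mul h hv, posteriorMean]

theorem hasDerivAt_log_gaussianPartition_center [NeZero ν] (h : HasGaussianTail ν v) (hv : 0 < v)
    (t : ℝ) :
    HasDerivAt (fun r => log (gaussianPartition ν r v)) ((posteriorMean ν t v - t) / v) t := by
  have hcgf : HasDerivAt (cgf id (gaussianPosterior ν t v)) (posteriorMean ν t v) 0 := by
    simpa [deriv_cgf_id_gaussianPosterior h hv] using
      (analyticAt_cgf (mem_interior_integrableExpSet_id h hv t 0)).differentiableAt.hasDerivAt
  have hs : HasDerivAt (fun r => (r - t) / v) (1 / v) t :=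
    ((hasDerivAt_id t).sub_const t).div_const v
  have heq : (fun r => log (gaussianPartition ν r v)) = fun r =>
      cgf id (gaussianPosterior ν t v) ((r - t) / v) -
        ((r - t) / v * t + ((r - t) / v) ^ 2 * v / 2) + log (gaussianPartition ν t v) := by
    funext r
    rw [cgf_id_gaussianPosterior h hv, div_mul_cancel₀ _ hv.ne', add_sub_cancel]
    ring
  rw [heq]
  refine (((hcgf.comp_of_eq t hs (by simp)).sub ((hs.mul_const t).add
    (((hs.pow 2).mul_const v).div_const 2))).add_const _).congr_deriv ?_
  simp only [sub_self, zero_div]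
  ring

theorem hasDerivAt_posteriorMean (h : HasGaussianTail ν v) (hv : 0 < v) (t : ℝ) :
    HasDerivAt (fun r => posteriorMean ν r v) (posteriorVariance ν t v / v) t := by
  have h0 := mem_interior_integrableExpSet_id h hv t 0
  have hcgf : HasDerivAt (deriv (cgf id (gaussianPosterior ν t v))) (posteriorVariance ν t v)
      0 := by
    refine (analyticAt_cgf h0).deriv.differentiableAt.hasDerivAt.congr_deriv ?_
    have hvariance := variance_tilted_mul h0
    rw [gaussianPosterior_tilted_mul h hv, zero_mul, add_zero, iteratedDeriv_succ,
      iteratedDeriv_one] at hvariance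
    exact hvariance.symm
  have hs : HasDerivAt (fun r => (r - t) / v) (1 / v) t :=
    ((hasDerivAt_id t).sub_const t).div_const v
  have heq : (fun r => posteriorMean ν r v) =
      deriv (cgf id (gaussianPosterior ν t v)) ∘ fun r => (r - t) / v := by
    funext r
    rw [Function.comp_apply, deriv_cgf_id_gaussianPosterior h hv, div_mul_cancel₀ _ hv.ne',
      add_sub_cancel]
  rw [heq, ← mul_one_div]
  exact hcgf.comp_of_eq t hs (by simp)

theorem neg_sq_div_eq_mul (v x : ℝ) : -x ^ 2 / (2 * v) = -(2 * v)⁻¹ * x ^ 2 := by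
  ring

theorem neg_inv_mem_interior_integrableExpSet_sq (h : HasGaussianTail ν v) (hv : 0 < v) (t : ℝ) :
    -(2 * v)⁻¹ ∈ interior (integrableExpSet (fun x => (x - t) ^ 2) ν) := by
  have hmem : ∀ᶠ u in 𝓝 v, -(2 * u)⁻¹ ∈ integrableExpSet (fun x => (x - t) ^ 2) ν := by
    filter_upwards [h.eventually, lt_mem_nhds hv] with u hu hu0
    simpa only [integrableExpSet, Set.mem_ofPred_eq, neg_sq_div_eq_mul] using hu.integrable hu0 t
  have hcont : ContinuousAt (fun s : ℝ => -(2 * s)⁻¹) (-(2 * v)⁻¹) := by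
    fun_prop (disch := simp [hv.ne'])
  have hinv (s : ℝ) : -(2 * -(2 * s)⁻¹)⁻¹ = s := by
    simp only [mul_neg, inv_neg, neg_neg, mul_inv, inv_inv]
    ring
  rw [ContinuousAt, hinv] at hcont
  rw [mem_interior_iff_mem_nhds]
  filter_upwards [hcont.eventually hmem] with s hs
  rwa [hinv] at hs

theorem hasDerivAt_log_gaussianPartition_variance [NeZero ν] (h : HasGaussianTail ν v)
    (hv : 0 < v) (t : ℝ) :
    HasDerivAt (fun u => log (gaussianPartition ν t u))
      ((posteriorVariance ν t v + (posteriorMean ν t v - t) ^ 2) / (2 * v ^ 2)) v := by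
  have hv' := neg_inv_mem_interior_integrableExpSet_sq h hv t
  have hposterior : ν.tilted (fun x => -(2 * v)⁻¹ * (x - t) ^ 2) = gaussianPosterior ν t v := by
    simp only [gaussianPosterior, neg_sq_div_eq_mul]
  have hcgf : HasDerivAt (cgf (fun x => (x - t) ^ 2) ν)
      (posteriorVariance ν t v + (posteriorMean ν t v - t) ^ 2) (-(2 * v)⁻¹) := by
    refine (analyticAt_cgf hv').differentiableAt.hasDerivAt.congr_deriv ?_
    rw [← integral_tilted_mul_self hv', hposterior, integral_sq_sub_gaussianPosterior h hv]
  have hs : HasDerivAt (fun u : ℝ => -(2 * u)⁻¹) (1 / (2 * v ^ 2)) v := by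
    refine (((hasDerivAt_id v).const_mul 2).inv (by simpa using hv.ne')).neg.congr_deriv ?_
    simp only [id]
    field_simp
  have heq : (fun u => log (gaussianPartition ν t u)) =
      cgf (fun x => (x - t) ^ 2) ν ∘ fun u => -(2 * u)⁻¹ := by
    funext u
    simp only [gaussianPartition, neg_sq_div_eq_mul, Function.comp_apply, cgf, mgf]
  rw [heq, ← mul_one_div]
  exact hcgf.comp v hs

end GaussianPosterior

section OutputScore

/-- The output function `g_out(ω,V)` of a channel with likelihood measure `κ`. -/
noncomputable def outputScore (κ : Measure ℝ) (ω V : ℝ) : ℝ :=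
  (gaussianPosterior κ ω V)[fun z => z - ω] / V

/-- Density at `ω` of the convolution of `κ` with the centred Gaussian of variance `V`; this is
`Z^μ(ω,V)` when `κ` is the likelihood of the `μ`-th channel. -/
noncomputable def gaussianEvidence (κ : Measure ℝ) (ω V : ℝ) : ℝ :=
  (√(2 * π * V))⁻¹ * gaussianPartition κ ω V

variable {κ : Measure ℝ} [NeZero κ] {V : ℝ}

theorem outputScore_eq_posteriorMean_sub_div (h : HasGaussianTail κ V) (hV : 0 < V) (ω : ℝ) :
    outputScore κ ω V = (posteriorMean κ ω V - ω) / V := by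
  rw [outputScore, integral_sub_gaussianPosterior h hV]

theorem hasDerivAt_outputScore (h : HasGaussianTail κ V) (hV : 0 < V) (ω : ℝ) :
    HasDerivAt (fun r => outputScore κ r V) ((posteriorVariance κ ω V / V - 1) / V) ω := by
  simp only [outputScore_eq_posteriorMean_sub_div h hV]
  exact ((hasDerivAt_posteriorMean h hV ω).sub (hasDerivAt_id ω)).div_const V

theorem log_gaussianEvidence (h : HasGaussianTail κ V) (hV : 0 < V) (ω : ℝ) :
    log (gaussianEvidence κ ω V) = log (gaussianPartition κ ω V) - log (2 * π * V) / 2 := by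
  have hnorm : 0 < 2 * π * V := by positivity
  rw [gaussianEvidence, log_mul (inv_ne_zero (sqrt_pos.2 hnorm).ne')
    (gaussianPartition_pos h hV ω).ne', log_inv, log_sqrt hnorm.le]
  ring

theorem hasDerivAt_log_gaussianEvidence_center (h : HasGaussianTail κ V) (hV : 0 < V) (ω : ℝ) :
    HasDerivAt (fun r => log (gaussianEvidence κ r V)) (outputScore κ ω V) ω := by
  simp only [log_gaussianEvidence h hV]
  rw [outputScore_eq_posteriorMean_sub_div h hV]
  exact (hasDerivAt_log_gaussianPartition_center h hV ω).sub_const _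

theorem hasDerivAt_log_gaussianEvidence_variance (h : HasGaussianTail κ V) (hV : 0 < V) (ω : ℝ) :
    HasDerivAt (fun u => log (gaussianEvidence κ ω u))
      ((deriv (fun r => outputScore κ r V) ω + outputScore κ ω V ^ 2) / 2) V := by
  have hnear : (fun u => log (gaussianEvidence κ ω u)) =ᶠ[𝓝 V]
      fun u => log (gaussianPartition κ ω u) - log (2 * π * u) / 2 := by
    filter_upwards [h.eventually, lt_mem_nhds hV] with u hu hu0
    exact log_gaussianEvidence hu hu0 ω
  have hnorm : HasDerivAt (fun u : ℝ => log (2 * π * u) / 2) (1 / V / 2) V := by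
    refine ((((hasDerivAt_id V).const_mul (2 * π)).log (by positivity)).div_const 2).congr_deriv ?_
    simp only [id]
    field_simp
  refine (((hasDerivAt_log_gaussianPartition_variance h hV ω).sub hnorm).congr_of_eventuallyEq
    hnear).congr_deriv ?_
  rw [(hasDerivAt_outputScore h hV ω).deriv, outputScore_eq_posteriorMean_sub_div h hV]
  field_simp
  ring

end OutputScore

section CoordinateDerivative

variable {𝕜 E : Type*} [NontriviallyNormedField 𝕜] [NormedAddCommGroup E] [NormedSpace 𝕜 E]

theorem hasDerivAt_zero_iff_of_hasDerivAt {f : 𝕜 → E} {d : E} {x : 𝕜} (h : HasDerivAt f d x) :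
    HasDerivAt f 0 x ↔ d = 0 :=
  ⟨h.unique, fun hd => hd ▸ h⟩

variable {ι : Type*} [Fintype ι] [DecidableEq ι]

theorem hasDerivAt_sum_update {f : ι → 𝕜 → E} {x : ι → 𝕜} {i : ι} {d : E}
    (hf : HasDerivAt (f i) d (x i)) :
    HasDerivAt (fun t => ∑ j, f j (Function.update x i t j)) d (x i) := by
  have hsummand (j : ι) : HasDerivAt (fun t => f j (Function.update x i t j))
      (if j = i then d else 0) (x i) := by
    rcases eq_or_ne j i with rfl | hj
    · simpa using hf
    · simpa [hj] using hasDerivAt_const (x i) (f j (x j))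
  simpa using HasDerivAt.fun_sum fun j (_ : j ∈ Finset.univ) => hsummand j

theorem hasDerivAt_dotProduct_update (u x : ι → 𝕜) (i : ι) :
    HasDerivAt (fun t => u ⬝ᵥ Function.update x i t) (u i) (x i) := by
  have hcoord : HasDerivAt (fun t => u i * t) (u i) (x i) := by
    simpa using (hasDerivAt_id (x i)).const_mul (u i)
  exact hasDerivAt_sum_update (f := fun j t => u j * t) hcoord

end CoordinateDerivative

theorem sub_div_eq_neg_iff {K : Type*} [Field K] {w z v g : K} (hv : v ≠ 0) :
    (w - z) / v = -g ↔ w = z - v * g := by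
  rw [div_eq_iff hv, sub_eq_iff_eq_add', neg_mul, ← sub_eq_add_neg, mul_comm]

section BetheFreeEnergy

variable {m n : Type*} [Fintype m] [Fintype n]

/-- The GAMP Bethe free energy with prior `ν i` on the `i`-th signal coordinate and likelihood
measure `κ μ` of the `μ`-th output; `F μ ^ 2 ⬝ᵥ c` is the output variance `V_μ`. -/
noncomputable def betheFreeEnergy (ν : n → Measure ℝ) (κ : m → Measure ℝ) (F : m → n → ℝ)
    (R S : n → ℝ) (ω : m → ℝ) (a c : n → ℝ) : ℝ :=
  -∑ μ, log (gaussianEvidence (κ μ) (ω μ) (F μ ^ 2 ⬝ᵥ c))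
    - ∑ i, (c i + (a i - R i) ^ 2) / (2 * S i ^ 2)
    - ∑ μ, (ω μ - F μ ⬝ᵥ a) ^ 2 / (2 * (F μ ^ 2 ⬝ᵥ c))
    - ∑ i, log (gaussianPartition (ν i) (R i) (S i ^ 2))

variable {ν : n → Measure ℝ} {κ : m → Measure ℝ} {F : m → n → ℝ} {R S a c : n → ℝ} {ω : m → ℝ}
  {i : n} {μ : m}

theorem hasDerivAt_betheFreeEnergy_R [DecidableEq n] [NeZero (ν i)] (hS : 0 < S i)
    (hν : HasGaussianTail (ν i) (S i ^ 2)) :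
    HasDerivAt (fun t => betheFreeEnergy ν κ F (Function.update R i t) S ω a c)
      ((a i - posteriorMean (ν i) (R i) (S i ^ 2)) / S i ^ 2) (R i) := by
  have hquadratic : HasDerivAt (fun r => (c i + (a i - r) ^ 2) / (2 * S i ^ 2))
      ((R i - a i) / S i ^ 2) (R i) := by
    refine (((((hasDerivAt_id (R i)).const_sub (a i)).pow 2).const_add (c i)).div_const
      (2 * S i ^ 2)).congr_deriv ?_
    simp only [id]
    ring
  have hinput := hasDerivAt_sum_update
    (f := fun j r => (c j + (a j - r) ^ 2) / (2 * S j ^ 2)) hquadratic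
  have hpartition := hasDerivAt_sum_update
    (f := fun j r => log (gaussianPartition (ν j) r (S j ^ 2)))
    (hasDerivAt_log_gaussianPartition_center hν (by positivity) (R i))
  refine (((hinput.const_sub _).sub_const _).sub hpartition).congr_deriv ?_
  ring

theorem hasDerivAt_betheFreeEnergy_S [DecidableEq n] [NeZero (ν i)] (hS : 0 < S i)
    (hν : HasGaussianTail (ν i) (S i ^ 2)) :
    HasDerivAt (fun t => betheFreeEnergy ν κ F R (Function.update S i t) ω a c)
      ((c i + (a i - R i) ^ 2 - (posteriorVariance (ν i) (R i) (S i ^ 2)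
        + (posteriorMean (ν i) (R i) (S i ^ 2) - R i) ^ 2)) / S i ^ 3) (S i) := by
  have hquadratic : HasDerivAt (fun s => (c i + (a i - R i) ^ 2) / (2 * s ^ 2))
      (-(c i + (a i - R i) ^ 2) / S i ^ 3) (S i) := by
    refine ((hasDerivAt_const (S i) (c i + (a i - R i) ^ 2)).div
      ((hasDerivAt_pow 2 (S i)).const_mul 2) (by positivity)).congr_deriv ?_
    field_simp
    ring
  have hlog := HasDerivAt.comp (h := fun s => s ^ 2) (S i)
    (hasDerivAt_log_gaussianPartition_variance hν (by positivity) (R i)) (hasDerivAt_pow 2 (S i))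
  have hinput := hasDerivAt_sum_update
    (f := fun j s => (c j + (a j - R j) ^ 2) / (2 * s ^ 2)) hquadratic
  have hpartition := hasDerivAt_sum_update
    (f := fun j s => log (gaussianPartition (ν j) (R j) (s ^ 2))) hlog
  refine (((hinput.const_sub _).sub_const _).sub hpartition).congr_deriv ?_
  field_simp
  ring

theorem hasDerivAt_betheFreeEnergy_omega [DecidableEq m] [NeZero (κ μ)]
    (hV : 0 < F μ ^ 2 ⬝ᵥ c) (hκ : HasGaussianTail (κ μ) (F μ ^ 2 ⬝ᵥ c)) :
    HasDerivAt (fun t => betheFreeEnergy ν κ F R S (Function.update ω μ t) a c)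
      (-outputScore (κ μ) (ω μ) (F μ ^ 2 ⬝ᵥ c) - (ω μ - F μ ⬝ᵥ a) / (F μ ^ 2 ⬝ᵥ c)) (ω μ) := by
  have hquadratic : HasDerivAt (fun w => (w - F μ ⬝ᵥ a) ^ 2 / (2 * (F μ ^ 2 ⬝ᵥ c)))
      ((ω μ - F μ ⬝ᵥ a) / (F μ ^ 2 ⬝ᵥ c)) (ω μ) := by
    refine ((((hasDerivAt_id (ω μ)).sub_const _).pow 2).div_const _).congr_deriv ?_
    simp only [id]
    ring
  have hevidence := hasDerivAt_sum_update
    (f := fun γ w => log (gaussianEvidence (κ γ) w (F γ ^ 2 ⬝ᵥ c)))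
    (hasDerivAt_log_gaussianEvidence_center hκ hV (ω μ))
  have houtput := hasDerivAt_sum_update
    (f := fun γ w => (w - F γ ⬝ᵥ a) ^ 2 / (2 * (F γ ^ 2 ⬝ᵥ c))) hquadratic
  exact ((hevidence.neg.sub_const _).sub houtput).sub_const _

theorem hasDerivAt_betheFreeEnergy_a [DecidableEq n] :
    HasDerivAt (fun t => betheFreeEnergy ν κ F R S ω (Function.update a i t) c)
      ((R i - a i) / S i ^ 2 + ∑ μ, F μ i * ((ω μ - F μ ⬝ᵥ a) / (F μ ^ 2 ⬝ᵥ c))) (a i) := by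
  have hquadratic : HasDerivAt (fun x => (c i + (x - R i) ^ 2) / (2 * S i ^ 2))
      ((a i - R i) / S i ^ 2) (a i) := by
    refine (((((hasDerivAt_id (a i)).sub_const (R i)).pow 2).const_add (c i)).div_const
      (2 * S i ^ 2)).congr_deriv ?_
    simp only [id]
    ring
  have houtput (μ : m) : HasDerivAt
      (fun t => (ω μ - F μ ⬝ᵥ Function.update a i t) ^ 2 / (2 * (F μ ^ 2 ⬝ᵥ c)))
      (-(F μ i * ((ω μ - F μ ⬝ᵥ a) / (F μ ^ 2 ⬝ᵥ c)))) (a i) := by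
    refine ((((hasDerivAt_dotProduct_update (F μ) a i).const_sub (ω μ)).pow 2).div_const
      _).congr_deriv ?_
    rw [Function.update_eq_self]
    ring
  have hinput := hasDerivAt_sum_update
    (f := fun j x => (c j + (x - R j) ^ 2) / (2 * S j ^ 2)) hquadratic
  refine (((hinput.const_sub _).sub (HasDerivAt.fun_sum fun μ _ => houtput μ)).sub_const
    _).congr_deriv ?_
  rw [Finset.sum_neg_distrib]
  ring

theorem hasDerivAt_betheFreeEnergy_c [DecidableEq n] [∀ μ, NeZero (κ μ)]
    (hV : ∀ μ, 0 < F μ ^ 2 ⬝ᵥ c) (hκ : ∀ μ, HasGaussianTail (κ μ) (F μ ^ 2 ⬝ᵥ c)) :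
    HasDerivAt (fun t => betheFreeEnergy ν κ F R S ω a (Function.update c i t))
      ((-∑ μ, F μ i ^ 2 * (deriv (fun w => outputScore (κ μ) w (F μ ^ 2 ⬝ᵥ c)) (ω μ)
          + outputScore (κ μ) (ω μ) (F μ ^ 2 ⬝ᵥ c) ^ 2) - 1 / S i ^ 2
          + ∑ μ, F μ i ^ 2 * ((ω μ - F μ ⬝ᵥ a) / (F μ ^ 2 ⬝ᵥ c)) ^ 2) / 2) (c i) := by
  have hvariance (μ : m) := hasDerivAt_dotProduct_update (F μ ^ 2) c i
  have hevidence (μ : m) : HasDerivAt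
      (fun t => log (gaussianEvidence (κ μ) (ω μ) (F μ ^ 2 ⬝ᵥ Function.update c i t)))
      (F μ i ^ 2 * (deriv (fun w => outputScore (κ μ) w (F μ ^ 2 ⬝ᵥ c)) (ω μ)
        + outputScore (κ μ) (ω μ) (F μ ^ 2 ⬝ᵥ c) ^ 2) / 2) (c i) := by
    refine ((hasDerivAt_log_gaussianEvidence_variance (hκ μ) (hV μ) (ω μ)).comp_of_eq (c i)
      (hvariance μ) (by rw [Function.update_eq_self])).congr_deriv ?_
    rw [Pi.pow_apply]
    ring
  have hinput := hasDerivAt_sum_update (f := fun j x => (x + (a j - R j) ^ 2) / (2 * S j ^ 2))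
    (((hasDerivAt_id (c i)).add_const ((a i - R i) ^ 2)).div_const (2 * S i ^ 2))
  have houtput (μ : m) : HasDerivAt
      (fun t => (ω μ - F μ ⬝ᵥ a) ^ 2 / (2 * (F μ ^ 2 ⬝ᵥ Function.update c i t)))
      (-(F μ i ^ 2 * ((ω μ - F μ ⬝ᵥ a) / (F μ ^ 2 ⬝ᵥ c)) ^ 2 / 2)) (c i) := by
    have hne := (hV μ).ne'
    refine ((hasDerivAt_const (c i) _).div ((hvariance μ).const_mul 2)
      (by simpa using hne)).congr_deriv ?_
    rw [Function.update_eq_self, Pi.pow_apply]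
    field_simp
    ring
  refine ((((HasDerivAt.fun_sum fun μ _ => hevidence μ).neg.sub hinput).sub
    (HasDerivAt.fun_sum fun μ _ => houtput μ)).sub_const _).congr_deriv ?_
  rw [Finset.sum_neg_distrib, ← Finset.sum_div, ← Finset.sum_div]
  ring

theorem hasDerivAt_zero_betheFreeEnergy_R_iff [DecidableEq n] [NeZero (ν i)] (hS : 0 < S i)
    (hν : HasGaussianTail (ν i) (S i ^ 2)) :
    HasDerivAt (fun t => betheFreeEnergy ν κ F (Function.update R i t) S ω a c) 0 (R i) ↔
      a i = posteriorMean (ν i) (R i) (S i ^ 2) := by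
  rw [hasDerivAt_zero_iff_of_hasDerivAt (hasDerivAt_betheFreeEnergy_R hS hν),
    div_eq_zero_iff, or_iff_left (by positivity), sub_eq_zero]

theorem hasDerivAt_zero_betheFreeEnergy_S_iff [DecidableEq n] [NeZero (ν i)] (hS : 0 < S i)
    (hν : HasGaussianTail (ν i) (S i ^ 2)) (ha : a i = posteriorMean (ν i) (R i) (S i ^ 2)) :
    HasDerivAt (fun t => betheFreeEnergy ν κ F R (Function.update S i t) ω a c) 0 (S i) ↔
      c i = posteriorVariance (ν i) (R i) (S i ^ 2) := by
  rw [hasDerivAt_zero_iff_of_hasDerivAt (hasDerivAt_betheFreeEnergy_S hS hν),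
    div_eq_zero_iff, or_iff_left (by positivity), ← ha, add_sub_add_right_eq_sub, sub_eq_zero]

theorem hasDerivAt_zero_betheFreeEnergy_omega_iff [DecidableEq m] [NeZero (κ μ)]
    (hV : 0 < F μ ^ 2 ⬝ᵥ c) (hκ : HasGaussianTail (κ μ) (F μ ^ 2 ⬝ᵥ c)) :
    HasDerivAt (fun t => betheFreeEnergy ν κ F R S (Function.update ω μ t) a c) 0 (ω μ) ↔
      ω μ = F μ ⬝ᵥ a - (F μ ^ 2 ⬝ᵥ c) * outputScore (κ μ) (ω μ) (F μ ^ 2 ⬝ᵥ c) := by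
  rw [hasDerivAt_zero_iff_of_hasDerivAt (hasDerivAt_betheFreeEnergy_omega hV hκ), sub_eq_zero,
    eq_comm, sub_div_eq_neg_iff hV.ne']

theorem hasDerivAt_zero_betheFreeEnergy_a_iff [DecidableEq n] (hS : 0 < S i)
    (hV : ∀ μ, 0 < F μ ^ 2 ⬝ᵥ c)
    (hω : ∀ μ, ω μ = F μ ⬝ᵥ a - (F μ ^ 2 ⬝ᵥ c) * outputScore (κ μ) (ω μ) (F μ ^ 2 ⬝ᵥ c)) :
    HasDerivAt (fun t => betheFreeEnergy ν κ F R S ω (Function.update a i t) c) 0 (a i) ↔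
      R i = a i + S i ^ 2 * ∑ μ, F μ i * outputScore (κ μ) (ω μ) (F μ ^ 2 ⬝ᵥ c) := by
  have hresidual (μ : m) := (sub_div_eq_neg_iff (hV μ).ne').2 (hω μ)
  rw [hasDerivAt_zero_iff_of_hasDerivAt hasDerivAt_betheFreeEnergy_a]
  simp only [hresidual, mul_neg, Finset.sum_neg_distrib]
  rw [← sub_eq_add_neg, sub_eq_zero, div_eq_iff (by positivity), sub_eq_iff_eq_add', mul_comm]

theorem hasDerivAt_zero_betheFreeEnergy_c_iff [DecidableEq n] [∀ μ, NeZero (κ μ)]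
    (hV : ∀ μ, 0 < F μ ^ 2 ⬝ᵥ c) (hκ : ∀ μ, HasGaussianTail (κ μ) (F μ ^ 2 ⬝ᵥ c))
    (hω : ∀ μ, ω μ = F μ ⬝ᵥ a - (F μ ^ 2 ⬝ᵥ c) * outputScore (κ μ) (ω μ) (F μ ^ 2 ⬝ᵥ c)) :
    HasDerivAt (fun t => betheFreeEnergy ν κ F R S ω a (Function.update c i t)) 0 (c i) ↔
      1 / S i ^ 2 = ∑ μ, F μ i ^ 2 *
        -deriv (fun w => outputScore (κ μ) w (F μ ^ 2 ⬝ᵥ c)) (ω μ) := by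
  have hresidual (μ : m) := (sub_div_eq_neg_iff (hV μ).ne').2 (hω μ)
  rw [hasDerivAt_zero_iff_of_hasDerivAt (hasDerivAt_betheFreeEnergy_c hV hκ)]
  simp only [hresidual, mul_add, Finset.sum_add_distrib, mul_neg, Finset.sum_neg_distrib, neg_sq]
  constructor <;> intro h <;> linarith

theorem stmt17_general [DecidableEq m] [DecidableEq n] (ν : n → Measure ℝ) [∀ i, NeZero (ν i)]
    (κ : m → Measure ℝ) [∀ μ, NeZero (κ μ)] (F : m → n → ℝ) (R S a c : n → ℝ) (ω : m → ℝ)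
    (hS : ∀ i, 0 < S i) (hV : ∀ μ, 0 < F μ ^ 2 ⬝ᵥ c)
    (hν : ∀ i, HasGaussianTail (ν i) (S i ^ 2))
    (hκ : ∀ μ, HasGaussianTail (κ μ) (F μ ^ 2 ⬝ᵥ c)) :
    ((∀ i, HasDerivAt (fun t => betheFreeEnergy ν κ F (Function.update R i t) S ω a c) 0 (R i)) ∧
     (∀ i, HasDerivAt (fun t => betheFreeEnergy ν κ F R (Function.update S i t) ω a c) 0 (S i)) ∧
     (∀ μ, HasDerivAt (fun t => betheFreeEnergy ν κ F R S (Function.update ω μ t) a c) 0 (ω μ)) ∧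
     (∀ i, HasDerivAt (fun t => betheFreeEnergy ν κ F R S ω (Function.update a i t) c) 0 (a i)) ∧
     (∀ i, HasDerivAt (fun t => betheFreeEnergy ν κ F R S ω a (Function.update c i t)) 0 (c i)))
    ↔ ((∀ i, a i = posteriorMean (ν i) (R i) (S i ^ 2)) ∧
       (∀ i, c i = posteriorVariance (ν i) (R i) (S i ^ 2)) ∧
       (∀ μ, ω μ = F μ ⬝ᵥ a - (F μ ^ 2 ⬝ᵥ c) * outputScore (κ μ) (ω μ) (F μ ^ 2 ⬝ᵥ c)) ∧
       (∀ i, R i = a i + S i ^ 2 * ∑ μ, F μ i * outputScore (κ μ) (ω μ) (F μ ^ 2 ⬝ᵥ c)) ∧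
       (∀ i, 1 / S i ^ 2 = ∑ μ, F μ i ^ 2 *
          -deriv (fun w => outputScore (κ μ) w (F μ ^ 2 ⬝ᵥ c)) (ω μ))) := by
  simp only [hasDerivAt_zero_betheFreeEnergy_R_iff (hS _) (hν _),
    hasDerivAt_zero_betheFreeEnergy_omega_iff (hV _) (hκ _)]
  refine and_congr_right fun ha => and_congr ?_ (and_congr_right fun hω => and_congr ?_ ?_)
  · exact forall_congr' fun i => hasDerivAt_zero_betheFreeEnergy_S_iff (hS i) (hν i) (ha i)
  · exact forall_congr' fun i => hasDerivAt_zero_betheFreeEnergy_a_iff (hS i) hV hω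
  · exact forall_congr' fun i => hasDerivAt_zero_betheFreeEnergy_c_iff hV hκ hω

end BetheFreeEnergy

section Prior

variable {ρ R σ : ℝ}

theorem isProbabilityMeasure_P0 (hρ : ρ ∈ Set.Icc (0 : ℝ) 1) : IsProbabilityMeasure (P0 ρ) :=
  ⟨by simp [P0, ← ENNReal.ofReal_add hρ.1 (sub_nonneg.2 hρ.2)]⟩

theorem hasGaussianTail_P0 (hρ : ρ ∈ Set.Icc (0 : ℝ) 1) (hσ : 0 < σ) :
    HasGaussianTail (P0 ρ) (σ ^ 2) :=
  have := isProbabilityMeasure_P0 hρ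
  .of_isFiniteMeasure (by positivity)

theorem fa_eq_posteriorMean (ρ R σ : ℝ) : fa ρ R σ = posteriorMean (P0 ρ) R (σ ^ 2) :=
  (integral_gaussianPosterior (P0 ρ) R (σ ^ 2) id).symm

theorem fc_eq_posteriorVariance (hρ : ρ ∈ Set.Icc (0 : ℝ) 1) (hσ : 0 < σ) :
    fc ρ R σ = posteriorVariance (P0 ρ) R (σ ^ 2) := by
  have := isProbabilityMeasure_P0 hρ
  rw [posteriorVariance_eq_sub (hasGaussianTail_P0 hρ hσ) (by positivity),
    integral_gaussianPosterior, ← fa_eq_posteriorMean]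
  rfl

end Prior

section Channel

/-- The likelihood of an output channel, as the measure with density `p`. -/
noncomputable def channelMeasure (p : ℝ → ℝ) : Measure ℝ :=
  volume.withDensity fun z => ENNReal.ofReal (p z)

variable {p : ℝ → ℝ} {ω V : ℝ}

theorem integral_channelMeasure (hp : Measurable p) (hp0 : ∀ z, 0 ≤ p z) (g : ℝ → ℝ) :
    ∫ z, g z ∂channelMeasure p = ∫ z, p z * g z := by
  rw [channelMeasure, integral_withDensity_eq_integral_toReal_smul hp.ennreal_ofReal
    (ae_of_all _ fun _ => ENNReal.ofReal_lt_top)]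
  simp only [ENNReal.toReal_ofReal (hp0 _), smul_eq_mul]

theorem integrable_channelMeasure_iff (hp : Measurable p) (hp0 : ∀ z, 0 ≤ p z) {g : ℝ → ℝ} :
    Integrable g (channelMeasure p) ↔ Integrable fun z => p z * g z := by
  rw [channelMeasure, integrable_withDensity_iff_integrable_smul' hp.ennreal_ofReal
    (ae_of_all _ fun _ => ENNReal.ofReal_lt_top)]
  simp only [ENNReal.toReal_ofReal (hp0 _), smul_eq_mul]

theorem Zout_eq_gaussianPartition (hp : Measurable p) (hp0 : ∀ z, 0 ≤ p z) (ω V : ℝ) :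
    Zout p ω V = gaussianPartition (channelMeasure p) ω V :=
  (integral_channelMeasure hp hp0 _).symm

theorem gout_eq_outputScore (hp : Measurable p) (hp0 : ∀ z, 0 ≤ p z) (ω V : ℝ) :
    gout p ω V = outputScore (channelMeasure p) ω V := by
  rw [outputScore, integral_gaussianPosterior, integral_channelMeasure hp hp0, gout,
    Zout_eq_gaussianPartition hp hp0]
  simp only [mul_assoc]
  field_simp

theorem neZero_channelMeasure_of_Zout_pos (hp : Measurable p) (hp0 : ∀ z, 0 ≤ p z)
    (hZ : 0 < Zout p ω V) : NeZero (channelMeasure p) := by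
  refine ⟨fun hzero => hZ.ne' ?_⟩
  rw [Zout_eq_gaussianPartition hp hp0, gaussianPartition, hzero, integral_zero_measure]

theorem integrable_mul_of_integrable_one_add_sq_mul {g : ℝ → ℝ}
    (hpg : AEStronglyMeasurable fun z => p z * g z)
    (h : Integrable fun z => (1 + z ^ 2) * p z * g z) : Integrable fun z => p z * g z := by
  refine h.mono hpg (ae_of_all _ fun z => ?_)
  rw [mul_assoc, norm_mul (1 + z ^ 2), norm_of_nonneg (by positivity : 0 ≤ 1 + z ^ 2)]
  exact le_mul_of_one_le_left (norm_nonneg _) (le_add_of_nonneg_right (sq_nonneg z))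

theorem hasGaussianTail_channelMeasure (hp : Measurable p) (hp0 : ∀ z, 0 ≤ p z) (hV : 0 < V)
    (hdom : ∃ V' > V, Integrable fun z => p z * exp (-(z - ω) ^ 2 / (2 * V'))) :
    HasGaussianTail (channelMeasure p) V := by
  obtain ⟨V', hVV', hint⟩ := hdom
  exact .of_integrable hV hVV' ((integrable_channelMeasure_iff hp hp0).2 hint)

end Channel

theorem FGAMP_eq_betheFreeEnergy (ρ : ℝ) {M N : ℕ} (F : Fin M → Fin N → ℝ) {p : Fin M → ℝ → ℝ}
    (hp : ∀ μ, Measurable (p μ)) (hp0 : ∀ μ z, 0 ≤ p μ z) (R Sv : Fin N → ℝ) (ω : Fin M → ℝ)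
    (a c : Fin N → ℝ) :
    FGAMP ρ F p R Sv ω a c =
      betheFreeEnergy (fun _ => P0 ρ) (fun μ => channelMeasure (p μ)) F R Sv ω a c := by
  simp only [FGAMP, Zmu, Zout_eq_gaussianPartition (hp _) (hp0 _)]
  rfl

/-- Bethe/GAMP correspondence: under the stated positivity and domination
hypotheses, all partial derivatives of the GAMP Bethe free energy with respect to each
`R_i`, `Σ_i`, `ω_μ`, `a_i` and `c_i` vanish at `(R,Σ,ω,a,c)` iff the GAMP fixed-point
equations (i)–(v) hold. -/
theorem stmt17 (ρ : ℝ) (hρ : ρ ∈ Set.Icc (0 : ℝ) 1) {M N : ℕ}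
    (F : Fin M → Fin N → ℝ) (p : Fin M → ℝ → ℝ)
    (hp : ∀ μ, Measurable (p μ)) (hp0 : ∀ μ z, 0 ≤ p μ z)
    (R Sv a c : Fin N → ℝ) (ω : Fin M → ℝ)
    (hS : ∀ i, 0 < Sv i) (hc0 : ∀ i, 0 ≤ c i)
    (hVpos : ∀ μ, 0 < ∑ i, F μ i ^ 2 * c i)
    (hdom : ∀ μ, ∃ V' > ∑ i, F μ i ^ 2 * c i,
      Integrable (fun z => (1 + z ^ 2) * p μ z * Real.exp (-(z - ω μ) ^ 2 / (2 * V'))))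
    (hZ : ∀ μ, 0 < Zout (p μ) (ω μ) (∑ i, F μ i ^ 2 * c i)) :
    ((∀ i, HasDerivAt (fun t => FGAMP ρ F p (Function.update R i t) Sv ω a c) 0 (R i)) ∧
     (∀ i, HasDerivAt (fun t => FGAMP ρ F p R (Function.update Sv i t) ω a c) 0 (Sv i)) ∧
     (∀ μ, HasDerivAt (fun t => FGAMP ρ F p R Sv (Function.update ω μ t) a c) 0 (ω μ)) ∧
     (∀ i, HasDerivAt (fun t => FGAMP ρ F p R Sv ω (Function.update a i t) c) 0 (a i)) ∧
     (∀ i, HasDerivAt (fun t => FGAMP ρ F p R Sv ω a (Function.update c i t)) 0 (c i)))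
    ↔ ((∀ i, a i = fa ρ (R i) (Sv i)) ∧
       (∀ i, c i = fc ρ (R i) (Sv i)) ∧
       (∀ μ, ω μ = ∑ i, F μ i * a i
          - (∑ i, F μ i ^ 2 * c i) * gout (p μ) (ω μ) (∑ i, F μ i ^ 2 * c i)) ∧
       (∀ i, R i = a i
          + Sv i ^ 2 * ∑ μ, F μ i * gout (p μ) (ω μ) (∑ j, F μ j ^ 2 * c j)) ∧
       (∀ i, 1 / Sv i ^ 2 = ∑ μ, F μ i ^ 2 *
          (-deriv (fun ω' => gout (p μ) ω' (∑ j, F μ j ^ 2 * c j)) (ω μ)))) := by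
  have := isProbabilityMeasure_P0 hρ
  have (μ : Fin M) := neZero_channelMeasure_of_Zout_pos (hp μ) (hp0 μ) (hZ μ)
  simp only [FGAMP_eq_betheFreeEnergy ρ F hp hp0, fa_eq_posteriorMean,
    fc_eq_posteriorVariance hρ (hS _), gout_eq_outputScore (hp _) (hp0 _)]
  exact stmt17_general _ (fun μ => channelMeasure (p μ)) F R Sv a c ω hS hVpos
    (fun i => hasGaussianTail_P0 hρ (hS i))
    (fun μ => hasGaussianTail_channelMeasure (hp μ) (hp0 μ) (hVpos μ) ((hdom μ).imp fun V' h =>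
      h.imp_right (integrable_mul_of_integrable_one_add_sq_mul (by fun_prop))))
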